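/- Let B_0, B_1 be unitary N×N complex matrices satisfying B_0³ = B_1³ = 𝟙 such that the anticommutator B_0 B_1 + B_1 B_0 is unitary, and set T = B_0† B_1† B_0 B_1. Then B_0 and B_1 both commute with T: B_0 T = T B_0 and B_1 T = T B_1 (equivalently, B_0 and B_1 preserve the eigenspaces of T corresponding to the eigenvalues ω = exp(2πi/3) and ω²). -/

import Mathlib

/-!
Unitarity of the anticommutator says exactly that `T + T† = -1`, so `T ^ 2 + T + 1 = 0`, and
`B₀ T = B₁† B₀ B₁` again has order three, as does `B₁ T† = B₀† B₁ B₀`. Everything then follows from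
`commute_of_cube_eq_one`: if `A` and `A T` have order three and `T` is unitary with `T + T† = -1`,
then `A` commutes with `T`.

For that lemma put `P = A† T A`. The order-three relations give `P T = A T† A†`, so `P`, `T` and
`P T` are all roots of `X ^ 2 + X + 1`. This forces `(P - T) ^ 2 = 0`. Since `T + 1/2` and `P + 1/2`
are skew-adjoint, so is `P - T`, and a skew-adjoint matrix with square zero vanishes. Positivity is
used in this last step: the quadratic relations alone only make `P - T` nilpotent.
-/

open Matrix

/-- If `P`, `T` and `P * T` are roots of `X ^ 2 + X + 1`, then `P - T` has square zero. -/
lemma sub_mul_sub_eq_zero {R : Type*} [Ring R] {P T : R}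
    (hP : P * P = -1 - P) (hT : T * T = -1 - T)
    (hS : (P * T) * (P * T) = -1 - P * T) : (P - T) * (P - T) = 0 := by
  -- Here `-1 - P` and `-1 - T` are the inverses of `P` and `T`.
  have hP' : (-1 - P) * P = 1 := by rw [sub_mul, hP]; noncomm_ring
  have hT' : T * (-1 - T) = 1 := by rw [mul_sub, hT]; noncomm_ring
  -- Cancel the outer factors of `P T P T = -1 - P T` to isolate `T P`.
  have hTP : T * P = -((-1 - P) * (-1 - T)) - 1 := by
    calc T * P = ((-1 - P) * P) * (T * P) * (T * (-1 - T)) := by rw [hP', hT', one_mul, mul_one]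
      _ = (-1 - P) * ((P * T) * (P * T)) * (-1 - T) := by simp only [mul_assoc]
      _ = (-1 - P) * (-1 - P * T) * (-1 - T) := by rw [hS]
      _ = -((-1 - P) * (-1 - T)) - ((-1 - P) * P) * (T * (-1 - T)) := by noncomm_ring
      _ = _ := by rw [hP', hT', one_mul]
  have e : (P - T) * (P - T) = P * P - P * T - T * P + T * T := by noncomm_ring
  rw [e, hTP, hP, hT]
  noncomm_ring

open scoped ComplexOrder in
/-- Order-three elements `A` and `A T` force `A` to commute with `T`, when `T` is a unitary without
eigenvalue `1` and of order three (encoded as `T + T† = -1`). -/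
lemma commute_of_cube_eq_one {N : ℕ} {A T : Matrix (Fin N) (Fin N) ℂ}
    (hA : Aᴴ * A = 1) (hA3 : A ^ 3 = 1) (hT : T * Tᴴ = 1) (hsum : Tᴴ = -1 - T)
    (hAT : (A * T) ^ 3 = 1) : A * T = T * A := by
  have hA' : A * Aᴴ = 1 := mul_eq_one_comm.mp hA
  have hAA : Aᴴ * Aᴴ = A := by
    calc Aᴴ * Aᴴ = Aᴴ * Aᴴ * A ^ 3 := by rw [hA3, mul_one]
      _ = Aᴴ * (Aᴴ * A) * A * A := by simp only [pow_succ, pow_zero, one_mul, mul_assoc]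
      _ = A := by rw [hA, mul_one, hA, one_mul]
  have hTT : T * T = -1 - T := by
    have h := hT
    rw [hsum, mul_sub, mul_neg, mul_one] at h
    rw [← h]; abel
  have hTT' : Tᴴ * Tᴴ = -1 - Tᴴ := by
    simpa using congrArg conjTranspose hTT
  have hS : (Aᴴ * T * A) * T = A * Tᴴ * Aᴴ := by
    calc (Aᴴ * T * A) * T = Aᴴ * (Aᴴ * A) * T * A * T * (A * Aᴴ) := by
          rw [hA, hA', mul_one, mul_one]
      _ = (Aᴴ * Aᴴ) * (A * T * A * T * A * (T * Tᴴ)) * Aᴴ := by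
          rw [hT, mul_one]; simp only [mul_assoc]
      _ = (Aᴴ * Aᴴ) * (A * T) ^ 3 * Tᴴ * Aᴴ := by
          simp only [pow_succ, pow_zero, one_mul, mul_assoc]
      _ = _ := by rw [hAT, hAA, mul_one]
  have hSS : ((Aᴴ * T * A) * T) * ((Aᴴ * T * A) * T) = -1 - (Aᴴ * T * A) * T := by
    rw [hS]
    calc A * Tᴴ * Aᴴ * (A * Tᴴ * Aᴴ) = A * Tᴴ * (Aᴴ * A) * Tᴴ * Aᴴ := by simp only [mul_assoc]
      _ = A * (Tᴴ * Tᴴ) * Aᴴ := by rw [hA, mul_one]; simp only [mul_assoc]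
      _ = -(A * Aᴴ) - A * Tᴴ * Aᴴ := by rw [hTT']; noncomm_ring
      _ = _ := by rw [hA']
  have hPP : (Aᴴ * T * A) * (Aᴴ * T * A) = -1 - Aᴴ * T * A := by
    calc (Aᴴ * T * A) * (Aᴴ * T * A) = Aᴴ * T * (A * Aᴴ) * T * A := by simp only [mul_assoc]
      _ = Aᴴ * (T * T) * A := by rw [hA', mul_one]; simp only [mul_assoc]
      _ = -(Aᴴ * A) - Aᴴ * T * A := by rw [hTT]; noncomm_ring
      _ = _ := by rw [hA]
  have hskew : (Aᴴ * T * A - T)ᴴ = -(Aᴴ * T * A - T) := by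
    rw [conjTranspose_sub, conjTranspose_mul, conjTranspose_mul, conjTranspose_conjTranspose, hsum]
    calc Aᴴ * ((-1 - T) * A) - (-1 - T) = -(Aᴴ * A) - Aᴴ * T * A + 1 + T := by noncomm_ring
      _ = _ := by rw [hA]; abel
  have hzero : Aᴴ * T * A - T = 0 := by
    apply conjTranspose_mul_self_eq_zero.mp
    rw [hskew, neg_mul, sub_mul_sub_eq_zero hPP hTT hSS, neg_zero]
  calc A * T = A * (Aᴴ * T * A) := by rw [sub_eq_zero.mp hzero]
    _ = (A * Aᴴ) * T * A := by simp only [mul_assoc]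
    _ = T * A := by rw [hA', one_mul]

lemma conj_cube_eq_one {N : ℕ} {A B : Matrix (Fin N) (Fin N) ℂ}
    (hB : Bᴴ * B = 1) (hA3 : A ^ 3 = 1) : (Bᴴ * A * B) ^ 3 = 1 := by
  have hB' : B * Bᴴ = 1 := mul_eq_one_comm.mp hB
  calc (Bᴴ * A * B) ^ 3 = Bᴴ * A * (B * Bᴴ) * A * (B * Bᴴ) * A * B := by
        simp only [pow_succ, pow_zero, one_mul, mul_assoc]
    _ = Bᴴ * A ^ 3 * B := by
        rw [hB', mul_one, mul_one]; simp only [pow_succ, pow_zero, one_mul, mul_assoc]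
    _ = 1 := by rw [hA3, mul_one, hB]

/-- if `B₀, B₁` are unitaries of order 3 whose anticommutator is
unitary, then both commute with `T = B₀† B₁† B₀ B₁` (equivalently, they
preserve the eigenspaces of `T`). -/
theorem commutator_is_central_for_order_three_unitaries
    (N : ℕ) (B₀ B₁ : Matrix (Fin N) (Fin N) ℂ)
    (hB₀U : B₀ ∈ Matrix.unitaryGroup (Fin N) ℂ)
    (hB₁U : B₁ ∈ Matrix.unitaryGroup (Fin N) ℂ)
    (hB₀3 : B₀ ^ 3 = 1) (hB₁3 : B₁ ^ 3 = 1)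
    (hanti : B₀ * B₁ + B₁ * B₀ ∈ Matrix.unitaryGroup (Fin N) ℂ)
    (T : Matrix (Fin N) (Fin N) ℂ)
    (hTdef : T = B₀ᴴ * B₁ᴴ * B₀ * B₁) :
    B₀ * T = T * B₀ ∧ B₁ * T = T * B₁ := by
  have h0 : B₀ᴴ * B₀ = 1 := mem_unitaryGroup_iff'.mp hB₀U
  have h1 : B₁ᴴ * B₁ = 1 := mem_unitaryGroup_iff'.mp hB₁U
  have h0' : B₀ * B₀ᴴ = 1 := mul_eq_one_comm.mp h0
  have h1' : B₁ * B₁ᴴ = 1 := mul_eq_one_comm.mp h1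
  have hU : (B₀ * B₁ + B₁ * B₀)ᴴ * (B₀ * B₁ + B₁ * B₀) = 1 := mem_unitaryGroup_iff'.mp hanti
  have hTs : Tᴴ = B₁ᴴ * B₀ᴴ * B₁ * B₀ := by
    simp [hTdef, mul_assoc]
  have hBT : B₀ * T = B₁ᴴ * B₀ * B₁ := by
    calc B₀ * T = (B₀ * B₀ᴴ) * B₁ᴴ * B₀ * B₁ := by rw [hTdef]; simp only [mul_assoc]
      _ = _ := by rw [h0', one_mul]
  have hBTs : B₁ * Tᴴ = B₀ᴴ * B₁ * B₀ := by
    calc B₁ * Tᴴ = (B₁ * B₁ᴴ) * B₀ᴴ * B₁ * B₀ := by rw [hTs]; simp only [mul_assoc]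
      _ = _ := by rw [h1', one_mul]
  have hTT : T * Tᴴ = 1 := by
    calc T * Tᴴ = B₀ᴴ * B₁ᴴ * B₀ * (B₁ * Tᴴ) := by rw [hTdef]; simp only [mul_assoc]
      _ = B₀ᴴ * B₁ᴴ * (B₀ * B₀ᴴ) * B₁ * B₀ := by rw [hBTs]; simp only [mul_assoc]
      _ = B₀ᴴ * (B₁ᴴ * B₁) * B₀ := by rw [h0', mul_one]; simp only [mul_assoc]
      _ = 1 := by rw [h1, mul_one, h0]
  have hsum : Tᴴ = -1 - T := by
    have e : (B₀ * B₁ + B₁ * B₀)ᴴ * (B₀ * B₁ + B₁ * B₀) = 1 + Tᴴ + T + 1 := by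
      calc (B₀ * B₁ + B₁ * B₀)ᴴ * (B₀ * B₁ + B₁ * B₀)
          = B₁ᴴ * (B₀ᴴ * B₀) * B₁ + B₁ᴴ * B₀ᴴ * B₁ * B₀ + B₀ᴴ * B₁ᴴ * B₀ * B₁
              + B₀ᴴ * (B₁ᴴ * B₁) * B₀ := by
            rw [conjTranspose_add, conjTranspose_mul, conjTranspose_mul]; noncomm_ring
        _ = _ := by rw [h0, h1, mul_one, mul_one, h0, h1, ← hTs, ← hTdef]
    rw [hU] at e
    calc Tᴴ = (1 + Tᴴ + T + 1) - 1 - 1 - T := by abel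
      _ = -1 - T := by rw [← e]; abel
  have hsum' : Tᴴᴴ = -1 - Tᴴ := by
    rw [conjTranspose_conjTranspose, hsum]; abel
  refine ⟨commute_of_cube_eq_one h0 hB₀3 hTT hsum (hBT ▸ conj_cube_eq_one h1 hB₀3), ?_⟩
  -- Swapping the roles of `B₀` and `B₁` replaces `T` by `T†`.
  have h := commute_of_cube_eq_one (T := Tᴴ) h1 hB₁3
    (by rw [conjTranspose_conjTranspose]; exact mul_eq_one_comm.mp hTT) hsum'
    (hBTs ▸ conj_cube_eq_one h0 hB₁3)
  rw [conjTranspose_conjTranspose] at hsum'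
  rw [hsum', mul_sub, sub_mul, h]
  noncomm_ring
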